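/- arXiv:2505.24364 — 2 statements merged into one kernel-verified Lean document; each statement's English description precedes it below -/
import Mathlib

section
/- Let G be a simple graph with n vertices and m edges such that m ≥ (73/16)·n. Then for every cyclic ordering of the vertices of G, the number of unordered pairs of edges of G whose endpoints interleave in that cyclic order is at least (1837568/19061833)·m³/n² (≈ (1/10.37)·m³/n²). Equivalently, the outer (convex) crossing number satisfies cr_o(G) ≥ (1837568/19061833)·m³/n². -/
/-- `x` lies strictly between `a` and `b` in the cyclic order of `Fin n`
(going forward from `a` to `b` along the cycle). -/
def cycBtw (n : ℕ) (a b x : Fin n) : Prop :=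
  0 < (x.val + n - a.val) % n ∧ (x.val + n - a.val) % n < (b.val + n - a.val) % n

/-- Two edges `e` and `f` cross in the cyclic order determined by the positions `σ`:
they have four distinct endpoints and the endpoints interleave, i.e. exactly one
endpoint of `f` lies strictly between the endpoints of `e`. -/
def crossing (n : ℕ) (σ : Fin n → Fin n) (e f : Sym2 (Fin n)) : Prop :=
  ∃ a b c d : Fin n, e = s(a, b) ∧ f = s(c, d) ∧
    a ≠ b ∧ c ≠ d ∧ a ≠ c ∧ a ≠ d ∧ b ≠ c ∧ b ≠ d ∧
    (cycBtw n (σ a) (σ b) (σ c) ↔ ¬ cycBtw n (σ a) (σ b) (σ d))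

/-- With respect to the cyclic order given by positions `σ`, every edge of `G`
is crossed by at most `k` other edges. -/
def OuterKPlanarOrd (n k : ℕ) (σ : Fin n → Fin n) (G : SimpleGraph (Fin n)) : Prop :=
  ∀ e ∈ G.edgeSet, ({f ∈ G.edgeSet | crossing n σ e f}).ncard ≤ k

/-- `G` is outer `k`-planar: its vertices can be arranged in a cyclic order such
that every edge is crossed by at most `k` other edges. -/
def IsOuterKPlanar (n k : ℕ) (G : SimpleGraph (Fin n)) : Prop :=
  ∃ σ : Fin n ≃ Fin n, OuterKPlanarOrd n k (⇑σ) G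

namespace ConvexGraph

/-- The chords `e` and `f` interleave, with `e` starting first. -/
def Interleave (e f : ℕ × ℕ) : Prop := e.1 < f.1 ∧ f.1 < e.2 ∧ e.2 < f.2

instance : DecidableRel Interleave := fun e f => by unfold Interleave; infer_instance

/-- The number of interleaving pairs of chords in `E`. -/
def crossingCount (E : Finset (ℕ × ℕ)) : ℕ :=
  ((E ×ˢ E).filter fun q => Interleave q.1 q.2).card

/-- The number of chords in `E` that cross the chord from `u` to `v`. -/
def chordCrossings (E : Finset (ℕ × ℕ)) (u v : ℕ) : ℕ :=
  (E.filter fun e => Interleave (u, v) e ∨ Interleave e (u, v)).card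

section Counting

variable {α : Type*} (E : Finset α) (P Q R S : α → Prop)
  [DecidablePred P] [DecidablePred Q] [DecidablePred R] [DecidablePred S]

theorem card_filter_le (h : ∀ e ∈ E, P e → Q e) : (E.filter P).card ≤ (E.filter Q).card :=
  Finset.card_le_card fun e he =>
    Finset.mem_filter.2 ⟨(Finset.mem_filter.1 he).1, h e (Finset.mem_filter.1 he).1
      (Finset.mem_filter.1 he).2⟩

theorem card_filter_le_add (h : ∀ e ∈ E, P e → Q e ∨ R e) :
    (E.filter P).card ≤ (E.filter Q).card + (E.filter R).card := by
  simp only [Finset.card_filter, ← Finset.sum_add_distrib]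
  refine Finset.sum_le_sum fun e he => ?_
  have := h e he
  split_ifs <;> first | omega | tauto

theorem add_card_filter_le₃ (hP : ∀ e ∈ E, P e → S e ∧ ¬ Q e ∧ ¬ R e)
    (hQ : ∀ e ∈ E, Q e → S e ∧ ¬ R e) (hR : ∀ e ∈ E, R e → S e) :
    (E.filter P).card + (E.filter Q).card + (E.filter R).card ≤ (E.filter S).card := by
  simp only [Finset.card_filter, ← Finset.sum_add_distrib]
  refine Finset.sum_le_sum fun e he => ?_
  have h1 := hP e he
  have h2 := hQ e he
  have h3 := hR e he
  split_ifs <;> first | omega | tauto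

end Counting

/-- Chords crossing `uv` whose endpoint strictly between `u` and `v` precedes `p`. -/
def leftOut (E : Finset (ℕ × ℕ)) (u v p : ℕ) : ℕ :=
  (E.filter fun e => (e.1 < u ∧ u < e.2 ∧ e.2 < p) ∨ (u < e.1 ∧ e.1 < p ∧ v < e.2)).card

/-- Chords crossing `uv` that end at `p`. -/
def midOut (E : Finset (ℕ × ℕ)) (u v p : ℕ) : ℕ :=
  (E.filter fun e => (e.1 < u ∧ e.2 = p) ∨ (e.1 = p ∧ v < e.2)).card

/-- Chords crossing `uv` whose endpoint strictly between `u` and `v` follows `p`. -/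
def rightOut (E : Finset (ℕ × ℕ)) (u v p : ℕ) : ℕ :=
  (E.filter fun e => (e.1 < u ∧ p < e.2 ∧ e.2 < v) ∨ (p < e.1 ∧ e.1 < v ∧ v < e.2)).card

theorem exists_median (E : Finset (ℕ × ℕ)) {u v : ℕ} (huv : u + 1 < v) :
    ∃ p, u < p ∧ p < v ∧ leftOut E u v p ≤ rightOut E u v p + midOut E u v p ∧
      rightOut E u v p ≤ leftOut E u v p + midOut E u v p := by
  classical
  have hex : ∃ p, u < p ∧ p < v ∧ rightOut E u v p ≤ leftOut E u v p + midOut E u v p := by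
    refine ⟨v - 1, by omega, by omega, ?_⟩
    have : rightOut E u v (v - 1) = 0 := by
      rw [rightOut, Finset.card_eq_zero, Finset.filter_eq_empty_iff]
      intro e _ h
      omega
    omega
  obtain ⟨h1, h2, h3⟩ := Nat.find_spec hex
  have hmin : ∀ q < Nat.find hex, _ := fun q hq => Nat.find_min hex hq
  generalize Nat.find hex = p at *
  refine ⟨p, h1, h2, ?_, h3⟩
  obtain rfl | hlt : p = u + 1 ∨ u + 1 < p := by omega
  · have : leftOut E u v (u + 1) = 0 := by
      rw [leftOut, Finset.card_eq_zero, Finset.filter_eq_empty_iff]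
      intro e _ h
      omega
    omega
  · have hq := hmin (p - 1) (by omega)
    have hA : leftOut E u v p ≤ leftOut E u v (p - 1) + midOut E u v (p - 1) :=
      card_filter_le_add E _ _ _ fun e _ h => by omega
    have hB : rightOut E u v (p - 1) ≤ rightOut E u v p + midOut E u v p :=
      card_filter_le_add E _ _ _ fun e _ h => by omega
    have : ¬ rightOut E u v (p - 1) ≤ leftOut E u v (p - 1) + midOut E u v (p - 1) :=
      fun h => hq ⟨by omega, by omega, h⟩
    omega

set_option maxHeartbeats 1000000 in
/-- If every chord of `E`, and the chord `uv`, is crossed by at most `k` chords of `E`, then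
`uv` is the base of a triangle whose other two sides are crossed by at most `k` chords. -/
theorem exists_apex (E : Finset (ℕ × ℕ)) {k : ℕ}
    (hk : ∀ e ∈ E, chordCrossings E e.1 e.2 ≤ k) {u v : ℕ} (huv : u + 1 < v)
    (hx : chordCrossings E u v ≤ k) :
    ∃ p, u < p ∧ p < v ∧ chordCrossings E u p ≤ k ∧ chordCrossings E p v ≤ k := by
  classical
  obtain ⟨p, hup, hpv, hA, hB⟩ := exists_median E huv
  have hout : leftOut E u v p + midOut E u v p + rightOut E u v p ≤ k := by
    refine le_trans (add_card_filter_le₃ E _ _ _ _ ?_ ?_ ?_) hx <;>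
      (intro e _ h; simp only [Interleave]; omega)
  set F := E.filter fun e =>
    e.1 < p ∧ p < e.2 ∧ u ≤ e.1 ∧ e.2 ≤ v ∧ ¬ (e.1 = u ∧ e.2 = v) with hF
  rcases F.eq_empty_or_nonempty with hemp | hne
  · rw [hF, Finset.filter_eq_empty_iff] at hemp
    have h1 : chordCrossings E u p ≤ leftOut E u v p := by
      refine card_filter_le E _ _ fun e he h => ?_
      have := hemp he
      simp only [Interleave] at h
      omega
    have h2 : chordCrossings E p v ≤ rightOut E u v p := by
      refine card_filter_le E _ _ fun e he h => ?_
      have := hemp he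
      simp only [Interleave] at h
      omega
    exact ⟨p, hup, hpv, by omega, by omega⟩
  obtain ⟨f, hfF, hmax⟩ := F.exists_max_image (fun e => e.2 - e.1) hne
  obtain ⟨hfE, hf⟩ := Finset.mem_filter.1 hfF
  have hmax' : ∀ e ∈ E, u ≤ e.1 → e.2 ≤ v → ¬ (e.1 = u ∧ e.2 = v) → e.1 ≤ f.1 → f.2 ≤ e.2 →
      e.1 = f.1 ∧ e.2 = f.2 := by
    intro e he h1 h2 h3 h4 h5
    have := hmax e (Finset.mem_filter.2 ⟨he, by omega⟩)
    omega
  have hfk := hk f hfE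
  obtain ⟨q, r⟩ := f
  dsimp only at hf hmax' hfk
  -- chords crossing `qr` to the left and to the right of `p`, and within `uv` or not
  set l := (E.filter fun e => (e.1 < u ∧ q < e.2 ∧ e.2 < p) ∨ (q < e.1 ∧ e.1 < p ∧ v < e.2) ∨
    (u ≤ e.1 ∧ e.1 < q ∧ q < e.2 ∧ e.2 < r)).card with hl
  set t := (E.filter fun e => (e.1 < u ∧ p < e.2 ∧ e.2 < r) ∨ (p < e.1 ∧ e.1 < r ∧ v < e.2) ∨
    (q < e.1 ∧ e.1 < r ∧ r < e.2 ∧ e.2 ≤ v)).card with ht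
  have hlt : l + midOut E u v p + t ≤ k := by
    refine le_trans (add_card_filter_le₃ E _ _ _ _ ?_ ?_ ?_) hfk <;>
      (intro e _ h; simp only [Interleave]; omega)
  have hrv : chordCrossings E r v ≤ rightOut E u v p + t := by
    refine card_filter_le_add E _ _ _ fun e he h => ?_
    have := hmax' e he
    simp only [Interleave] at h
    omega
  have huq : chordCrossings E u q ≤ leftOut E u v p + l := by
    refine card_filter_le_add E _ _ _ fun e he h => ?_
    have := hmax' e he
    simp only [Interleave] at h
    omega
  rcases Nat.eq_or_lt_of_le hf.2.2.1 with rfl | huq'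
  · have : leftOut E u v p ≤ l := card_filter_le E _ _ fun e _ h => by omega
    exact ⟨r, by omega, by omega, hfk, by omega⟩
  rcases Nat.eq_or_lt_of_le hf.2.2.2.1 with rfl | hrv'
  · have : rightOut E u r p ≤ t := card_filter_le E _ _ fun e _ h => by omega
    exact ⟨q, by omega, by omega, by omega, hfk⟩
  have hur : chordCrossings E u r ≤ (leftOut E u v p + midOut E u v p) + t := by
    refine le_trans (card_filter_le_add E _
      (fun e => ((e.1 < u ∧ u < e.2 ∧ e.2 < p) ∨ (u < e.1 ∧ e.1 < p ∧ v < e.2)) ∨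
        ((e.1 < u ∧ e.2 = p) ∨ (e.1 = p ∧ v < e.2))) _ fun e he h => ?_)
      (Nat.add_le_add_right (card_filter_le_add E _ _ _ fun _ _ h => h) t)
    have := hmax' e he
    simp only [Interleave] at h
    omega
  have hqv : chordCrossings E q v ≤ (rightOut E u v p + midOut E u v p) + l := by
    refine le_trans (card_filter_le_add E _
      (fun e => ((e.1 < u ∧ p < e.2 ∧ e.2 < v) ∨ (p < e.1 ∧ e.1 < v ∧ v < e.2)) ∨
        ((e.1 < u ∧ e.2 = p) ∨ (e.1 = p ∧ v < e.2))) _ fun e he h => ?_)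
      (Nat.add_le_add_right (card_filter_le_add E _ _ _ fun _ _ h => h) l)
    have := hmax' e he
    simp only [Interleave] at h
    omega
  by_cases h1 : chordCrossings E u r ≤ k ∧ chordCrossings E r v ≤ k
  · exact ⟨r, by omega, by omega, h1.1, h1.2⟩
  · exact ⟨q, by omega, by omega, by omega, by omega⟩

/-- The position of `i` relative to `u < p < v`; odd positions are single points. -/
def position (u p v i : ℕ) : ℕ :=
  if i < u then 0 else if i = u then 1 else if i < p then 2 else if i = p then 3
  else if i < v then 4 else if i = v then 5 else 6

theorem position_cases (u p v i : ℕ) :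
    (i < u ∧ position u p v i = 0) ∨ (i = u ∧ position u p v i = 1) ∨
    (u < i ∧ i < p ∧ position u p v i = 2) ∨ (u < i ∧ i = p ∧ position u p v i = 3) ∨
    (u < i ∧ p < i ∧ i < v ∧ position u p v i = 4) ∨
    (u < i ∧ p < i ∧ i = v ∧ position u p v i = 5) ∨
    (u < i ∧ p < i ∧ v < i ∧ position u p v i = 6) := by
  unfold position
  split_ifs <;> omega

/-- Both endpoints of `e` lie in `[u, v]`, and `e` is not the chord `uv` itself. -/
def Inner (u v : ℕ) (e : ℕ × ℕ) : Prop := u ≤ e.1 ∧ e.2 ≤ v ∧ ¬ (e.1 = u ∧ e.2 = v)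

instance (u v : ℕ) : DecidablePred (Inner u v) := fun e => by unfold Inner; infer_instance

/-- The number of chords of `E` below `uv`. -/
def innerCard (E : Finset (ℕ × ℕ)) (u v : ℕ) : ℕ := (E.filter (Inner u v)).card

/-- The number of crossings of `E` that involve a chord below `uv`. -/
def innerCrossings (E : Finset (ℕ × ℕ)) (u v : ℕ) : ℕ :=
  ((E ×ˢ E).filter fun q => Interleave q.1 q.2 ∧ (Inner u v q.1 ∨ Inner u v q.2)).card

/-- The number of chords of `E` joining two given positions relative to `u < p < v`. -/
def typeCount (E : Finset (ℕ × ℕ)) (u p v a b : ℕ) : ℕ :=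
  (E.filter fun e => position u p v e.1 = a ∧ position u p v e.2 = b).card

theorem position_lt_iff {u p v : ℕ} (hup : u < p) (hpv : p < v) (i : ℕ) :
    (i < u ↔ position u p v i < 1) ∧ (i < p ↔ position u p v i < 3) ∧
    (i < v ↔ position u p v i < 5) ∧ (u < i ↔ 1 < position u p v i) ∧
    (p < i ↔ 3 < position u p v i) ∧ (v < i ↔ 5 < position u p v i) ∧ position u p v i < 7 := by
  have := position_cases u p v i
  omega

theorem position_eq_iff {u p v : ℕ} (hup : u < p) (hpv : p < v) (i : ℕ) :
    (u ≤ i ↔ 1 ≤ position u p v i) ∧ (p ≤ i ↔ 3 ≤ position u p v i) ∧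
    (i ≤ p ↔ position u p v i ≤ 3) ∧ (i ≤ v ↔ position u p v i ≤ 5) ∧
    (i = u ↔ position u p v i = 1) ∧ (i = p ↔ position u p v i = 3) ∧
    (i = v ↔ position u p v i = 5) := by
  have := position_cases u p v i
  omega

theorem position_mono {u p v i j : ℕ} (hij : i < j) :
    position u p v i ≤ position u p v j ∧
    (position u p v i = position u p v j → position u p v i % 2 = 0) := by
  have := position_cases u p v i
  have := position_cases u p v j
  omega

theorem lt_of_position_lt {u p v i j : ℕ} (h : position u p v i < position u p v j) : i < j := by
  have := position_cases u p v i
  have := position_cases u p v j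
  omega

section Types

variable (E : Finset (ℕ × ℕ)) {u p v : ℕ}

theorem inner_iff (hup : u < p) (hpv : p < v) (e : ℕ × ℕ) :
    (Inner u v e ↔ Inner 1 5 (position u p v e.1, position u p v e.2)) ∧
    (Inner u p e ↔ Inner 1 3 (position u p v e.1, position u p v e.2)) ∧
    (Inner p v e ↔ Inner 3 5 (position u p v e.1, position u p v e.2)) := by
  obtain ⟨h1, h2, -, -, h5, h6, -⟩ := position_eq_iff hup hpv e.1
  obtain ⟨-, -, k3, k4, -, k6, k7⟩ := position_eq_iff hup hpv e.2
  simp only [Inner, h1, h2, h5, h6, k3, k4, k6, k7, and_self]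

theorem crosses_iff (hup : u < p) (hpv : p < v) (e : ℕ × ℕ) :
    ((Interleave (u, v) e ∨ Interleave e (u, v)) ↔
      (Interleave (1, 5) (position u p v e.1, position u p v e.2) ∨
        Interleave (position u p v e.1, position u p v e.2) (1, 5))) ∧
    ((Interleave (u, p) e ∨ Interleave e (u, p)) ↔
      (Interleave (1, 3) (position u p v e.1, position u p v e.2) ∨
        Interleave (position u p v e.1, position u p v e.2) (1, 3))) ∧
    ((Interleave (p, v) e ∨ Interleave e (p, v)) ↔
      (Interleave (3, 5) (position u p v e.1, position u p v e.2) ∨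
        Interleave (position u p v e.1, position u p v e.2) (3, 5))) := by
  obtain ⟨h1, h2, h3, h4, h5, h6, -⟩ := position_lt_iff hup hpv e.1
  obtain ⟨k1, k2, k3, k4, k5, k6, -⟩ := position_lt_iff hup hpv e.2
  simp only [Interleave, h1, h2, h3, h4, h5, k2, k3, k4, k5, k6, and_self]

theorem innerCard_le (hup : u < p) (hpv : p < v) :
    innerCard E u v ≤ innerCard E u p + innerCard E p v + typeCount E u p v 1 3 +
      typeCount E u p v 3 5 + typeCount E u p v 2 5 + typeCount E u p v 1 4 +
      typeCount E u p v 2 4 := by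
  simp only [innerCard, typeCount, Finset.card_filter, ← Finset.sum_add_distrib]
  refine Finset.sum_le_sum fun e _ => ?_
  obtain ⟨h1, h2, h3⟩ := inner_iff hup hpv e
  simp only [h1, h2, h3]
  have ha := (position_lt_iff hup hpv e.1).2.2.2.2.2.2
  have hb := (position_lt_iff hup hpv e.2).2.2.2.2.2.2
  generalize position u p v e.1 = a at *
  generalize position u p v e.2 = b at *
  clear h1 h2 h3
  revert a b
  decide

theorem chordCrossings_base (hup : u < p) (hpv : p < v) :
    chordCrossings E u v = typeCount E u p v 0 3 + typeCount E u p v 3 6 +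
      (typeCount E u p v 0 2 + typeCount E u p v 2 6) +
      (typeCount E u p v 0 4 + typeCount E u p v 4 6) := by
  simp only [chordCrossings, typeCount, Finset.card_filter, ← Finset.sum_add_distrib]
  refine Finset.sum_congr rfl fun e _ => ?_
  simp only [crosses_iff hup hpv e]
  have ha := (position_lt_iff hup hpv e.1).2.2.2.2.2.2
  have hb := (position_lt_iff hup hpv e.2).2.2.2.2.2.2
  generalize position u p v e.1 = a at *
  generalize position u p v e.2 = b at *
  revert a b
  decide

theorem chordCrossings_left (hup : u < p) (hpv : p < v) :
    chordCrossings E u p = typeCount E u p v 2 5 +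
      (typeCount E u p v 0 2 + typeCount E u p v 2 6) + typeCount E u p v 2 4 := by
  simp only [chordCrossings, typeCount, Finset.card_filter, ← Finset.sum_add_distrib]
  refine Finset.sum_congr rfl fun e _ => ?_
  simp only [crosses_iff hup hpv e]
  have ha := (position_lt_iff hup hpv e.1).2.2.2.2.2.2
  have hb := (position_lt_iff hup hpv e.2).2.2.2.2.2.2
  generalize position u p v e.1 = a at *
  generalize position u p v e.2 = b at *
  revert a b
  decide

theorem chordCrossings_right (hup : u < p) (hpv : p < v) :
    chordCrossings E p v = typeCount E u p v 1 4 +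
      (typeCount E u p v 0 4 + typeCount E u p v 4 6) + typeCount E u p v 2 4 := by
  simp only [chordCrossings, typeCount, Finset.card_filter, ← Finset.sum_add_distrib]
  refine Finset.sum_congr rfl fun e _ => ?_
  simp only [crosses_iff hup hpv e]
  have ha := (position_lt_iff hup hpv e.1).2.2.2.2.2.2
  have hb := (position_lt_iff hup hpv e.2).2.2.2.2.2.2
  generalize position u p v e.1 = a at *
  generalize position u p v e.2 = b at *
  revert a b
  decide

theorem typeCount_mul (a b c d : ℕ) :
    typeCount E u p v a b * typeCount E u p v c d =
      ∑ q ∈ E ×ˢ E, if (position u p v q.1.1 = a ∧ position u p v q.1.2 = b) ∧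
        (position u p v q.2.1 = c ∧ position u p v q.2.2 = d) then 1 else 0 := by
  rw [typeCount, typeCount, ← Finset.card_product, ← Finset.card_filter]
  congr 1
  ext q
  simp only [Finset.mem_product, Finset.mem_filter]
  tauto

theorem typeCount_mul_chordCrossings (a b x y : ℕ)
    (hxy : ∀ e : ℕ × ℕ, position u p v e.1 = a ∧ position u p v e.2 = b ↔ e = (x, y)) :
    typeCount E u p v a b * chordCrossings E x y ≤
      ∑ q ∈ E ×ˢ E, ((if Interleave q.1 q.2 ∧ position u p v q.1.1 = a ∧
        position u p v q.1.2 = b then 1 else 0) +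
        if Interleave q.1 q.2 ∧ position u p v q.2.1 = a ∧ position u p v q.2.2 = b
          then 1 else 0) := by
  calc typeCount E u p v a b * chordCrossings E x y
      ≤ ∑ e ∈ E, ∑ f ∈ E, ((if Interleave e f ∧ position u p v e.1 = a ∧
        position u p v e.2 = b then 1 else 0) +
        if Interleave f e ∧ position u p v e.1 = a ∧ position u p v e.2 = b then 1 else 0) := by
        rw [typeCount, chordCrossings, Finset.card_filter, Finset.card_filter, Finset.sum_mul_sum]
        refine Finset.sum_le_sum fun e _ => Finset.sum_le_sum fun f _ => ?_
        simp only [hxy]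
        by_cases h : e = (x, y)
        · subst h
          by_cases h1 : Interleave (x, y) f <;> by_cases h2 : Interleave f (x, y) <;> simp [h1, h2]
        · simp [h]
    _ = _ := by
        simp only [Finset.sum_product, Finset.sum_add_distrib]
        congr 1
        exact Finset.sum_comm

set_option synthInstance.maxSize 1000 in
set_option synthInstance.maxHeartbeats 400000 in
theorem innerCrossings_le (hE : ∀ e ∈ E, e.1 < e.2) (hup : u < p) (hpv : p < v) :
    innerCrossings E u p + innerCrossings E p v +
      typeCount E u p v 1 3 * chordCrossings E u p + typeCount E u p v 3 5 * chordCrossings E p v +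
      typeCount E u p v 0 3 * typeCount E u p v 2 5 +
      typeCount E u p v 2 5 * typeCount E u p v 3 6 +
      typeCount E u p v 0 3 * typeCount E u p v 1 4 +
      typeCount E u p v 1 4 * typeCount E u p v 3 6 +
      typeCount E u p v 1 4 * typeCount E u p v 2 5 +
      typeCount E u p v 0 3 * typeCount E u p v 2 4 +
      typeCount E u p v 2 4 * typeCount E u p v 3 6 +
      typeCount E u p v 0 4 * typeCount E u p v 2 5 +
      typeCount E u p v 2 5 * typeCount E u p v 4 6 +
      typeCount E u p v 0 2 * typeCount E u p v 1 4 +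
      typeCount E u p v 1 4 * typeCount E u p v 2 6 ≤ innerCrossings E u v := by
  have h13 := typeCount_mul_chordCrossings E (u := u) (p := p) (v := v) 1 3 u p fun e => by
    rw [Prod.ext_iff, (position_eq_iff hup hpv e.1).2.2.2.2.1,
      (position_eq_iff hup hpv e.2).2.2.2.2.2.1]
  have h35 := typeCount_mul_chordCrossings E (u := u) (p := p) (v := v) 3 5 p v fun e => by
    rw [Prod.ext_iff, (position_eq_iff hup hpv e.1).2.2.2.2.2.1,
      (position_eq_iff hup hpv e.2).2.2.2.2.2.2]
  grw [h13, h35]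
  simp only [typeCount_mul, innerCrossings, Finset.card_filter, ← Finset.sum_add_distrib]
  refine Finset.sum_le_sum fun q hq => ?_
  obtain ⟨he, hf⟩ := Finset.mem_product.1 hq
  obtain ⟨⟨i, j⟩, ⟨k, l⟩⟩ := q
  replace he : i < j := hE _ he
  replace hf : k < l := hE _ hf
  simp only [inner_iff hup hpv]
  have hX : Interleave (i, j) (k, l) →
      (position u p v i ≤ position u p v k ∧
        (position u p v i = position u p v k → position u p v i % 2 = 0)) ∧
      (position u p v k ≤ position u p v j ∧
        (position u p v k = position u p v j → position u p v k % 2 = 0)) ∧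
      (position u p v j ≤ position u p v l ∧
        (position u p v j = position u p v l → position u p v j % 2 = 0)) := fun h =>
    ⟨position_mono h.1, position_mono h.2.1, position_mono h.2.2⟩
  have hX' : position u p v i < position u p v k ∧ position u p v k < position u p v j ∧
      position u p v j < position u p v l → Interleave (i, j) (k, l) := fun h =>
    ⟨lt_of_position_lt h.1, lt_of_position_lt h.2.1, lt_of_position_lt h.2.2⟩
  have hi := (position_lt_iff hup hpv i).2.2.2.2.2.2
  have hj := (position_lt_iff hup hpv j).2.2.2.2.2.2
  have hk := (position_lt_iff hup hpv k).2.2.2.2.2.2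
  have hl := (position_lt_iff hup hpv l).2.2.2.2.2.2
  generalize position u p v i = a at *
  generalize position u p v j = b at *
  generalize position u p v k = c at *
  generalize position u p v l = d at *
  by_cases hI : Interleave (i, j) (k, l)
  · replace hX := hX hI
    simp only [hI, true_and]
    clear hI hX' h13 h35 hE hq
    revert a b c d
    decide +kernel
  · replace hX' := mt hX' hI
    simp only [hI, false_and, if_false]
    clear hI hX h13 h35 hE hq
    revert a b c d
    decide +kernel

end Types

/-- The endpoints strictly between `u` and `v` of the chords of `E` crossing `uv`. -/
def innerEnds (E : Finset (ℕ × ℕ)) (u v : ℕ) : Finset ℕ :=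
  (E.filter fun e => e.1 < u ∧ u < e.2 ∧ e.2 < v).image Prod.snd ∪
    (E.filter fun e => u < e.1 ∧ e.1 < v ∧ v < e.2).image Prod.fst

theorem mem_innerEnds {E : Finset (ℕ × ℕ)} {u v z : ℕ} :
    z ∈ innerEnds E u v ↔ ∃ e ∈ E, (e.1 < u ∧ u < e.2 ∧ e.2 < v ∧ e.2 = z) ∨
      (u < e.1 ∧ e.1 < v ∧ v < e.2 ∧ e.1 = z) := by
  simp only [innerEnds, Finset.mem_union, Finset.mem_image, Finset.mem_filter]
  constructor
  · rintro (⟨e, ⟨he, h⟩, rfl⟩ | ⟨e, ⟨he, h⟩, rfl⟩)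
    · exact ⟨e, he, Or.inl ⟨h.1, h.2.1, h.2.2, rfl⟩⟩
    · exact ⟨e, he, Or.inr ⟨h.1, h.2.1, h.2.2, rfl⟩⟩
  · rintro ⟨e, he, h | h⟩
    · exact Or.inl ⟨e, ⟨he, h.1, h.2.1, h.2.2.1⟩, h.2.2.2⟩
    · exact Or.inr ⟨e, ⟨he, h.1, h.2.1, h.2.2.1⟩, h.2.2.2⟩

/-- The discount earned by a chord crossed by `x` edges with `r` endpoints below it. -/
def credit (x r : ℕ) : ℕ :=
  (([[0], [0, 5], [0, 6, 8], [0, 6, 10, 11], [0, 6, 11, 13, 16],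
    [0, 6, 12, 15, 18, 24]] : List (List ℕ)).getD x []).getD (min r x) 0

theorem credit_mono {x r s : ℕ} (hx : x ≤ 5) (h : r ≤ s) : credit x r ≤ credit x s := by
  have key : ∀ x < 6, ∀ s < x + 1, ∀ r < s + 1, credit x r ≤ credit x s := by decide
  have hmin (r : ℕ) : credit x r = credit x (min r x) := by simp [credit]
  rw [hmin r, hmin s]
  exact key x (by omega) _ (by omega) _ (by omega)

/-- The inequality between the credits of the three sides of a triangle, in terms of the numbers
of chords through one side and the opposite corner, and through two sides. -/
def CreditLe (c₁ c₂ c₃ y₁₂ y₁₃ y₂₃ g₁₂ g₁₃ g₂₃ g₃₂ : ℕ) : Prop :=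
  12 + 6 * (c₂ + c₃ + y₂₃) + credit (c₁ + y₁₂ + y₁₃) (min c₁ 1 + g₁₂ + g₁₃) ≤
    18 + (c₂ + y₁₂ + y₂₃) + (c₃ + y₁₃ + y₂₃) +
    (c₁ * c₂ + c₁ * c₃ + c₂ * c₃ + c₁ * y₂₃ + c₂ * y₁₃ + c₃ * y₁₂) +
    credit (c₂ + y₁₂ + y₂₃) (max c₂ (max g₁₂ g₃₂)) +
    credit (c₃ + y₁₃ + y₂₃) (max c₃ (max g₁₃ g₂₃))

instance (c₁ c₂ c₃ y₁₂ y₁₃ y₂₃ g₁₂ g₁₃ g₂₃ g₃₂ : ℕ) :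
    Decidable (CreditLe c₁ c₂ c₃ y₁₂ y₁₃ y₂₃ g₁₂ g₁₃ g₂₃ g₃₂) := by
  unfold CreditLe; infer_instance

/-- `CreditLe` for all numbers of endpoints that the given numbers of chords may have. -/
def CreditLeAll (c₁ c₂ c₃ y₁₂ y₁₃ y₂₃ : ℕ) : Prop :=
  ∀ g₁₂ < y₁₂ + 1, ∀ g₁₃ < y₁₃ + 1, ∀ g₂₃ < y₂₃ + 1, ∀ g₃₂ < y₂₃ + 1,
    (y₁₂ = 0 ∨ 1 ≤ g₁₂) ∧ (y₁₃ = 0 ∨ 1 ≤ g₁₃) ∧ y₂₃ ≤ g₃₂ * g₂₃ →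
    CreditLe c₁ c₂ c₃ y₁₂ y₁₃ y₂₃ g₁₂ g₁₃ g₂₃ g₃₂

set_option synthInstance.maxSize 5000 in
set_option synthInstance.maxHeartbeats 400000 in
instance (c₁ c₂ c₃ y₁₂ y₁₃ y₂₃ : ℕ) : Decidable (CreditLeAll c₁ c₂ c₃ y₁₂ y₁₃ y₂₃) := by
  unfold CreditLeAll; infer_instance

theorem creditLeAll : ∀ y₁₂ < 6, ∀ y₁₃ < 6 - y₁₂, ∀ y₂₃ < 6 - max y₁₂ y₁₃,
    ∀ c₁ < 6 - y₁₂ - y₁₃, ∀ c₂ < 6 - y₁₂ - y₂₃, ∀ c₃ < 6 - y₁₃ - y₂₃,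
    CreditLeAll c₁ c₂ c₃ y₁₂ y₁₃ y₂₃ := by
  decide +kernel

theorem credit_triangle {c₁ c₂ c₃ y₁₂ y₁₃ y₂₃ g₁₂ g₁₃ g₂₃ g₃₂ : ℕ}
    (h₁ : c₁ + y₁₂ + y₁₃ ≤ 5) (h₂ : c₂ + y₁₂ + y₂₃ ≤ 5) (h₃ : c₃ + y₁₃ + y₂₃ ≤ 5)
    (hg₁₂ : g₁₂ ≤ y₁₂ ∧ (y₁₂ = 0 ∨ 1 ≤ g₁₂)) (hg₁₃ : g₁₃ ≤ y₁₃ ∧ (y₁₃ = 0 ∨ 1 ≤ g₁₃))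
    (hg₂₃ : g₂₃ ≤ y₂₃) (hg₃₂ : g₃₂ ≤ y₂₃) (hg : y₂₃ ≤ g₃₂ * g₂₃) :
    CreditLe c₁ c₂ c₃ y₁₂ y₁₃ y₂₃ g₁₂ g₁₃ g₂₃ g₃₂ :=
  creditLeAll y₁₂ (by omega) y₁₃ (by omega) y₂₃ (by omega) c₁ (by omega) c₂ (by omega) c₃ (by omega)
    g₁₂ (by omega) g₁₃ (by omega) g₂₃ (by omega) g₃₂ (by omega) ⟨hg₁₂.2, hg₁₃.2, hg⟩

/-- The chords of `E` joining two given positions relative to `u < p < v`. -/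
def typeSet (E : Finset (ℕ × ℕ)) (u p v a b : ℕ) : Finset (ℕ × ℕ) :=
  E.filter fun e => position u p v e.1 = a ∧ position u p v e.2 = b

theorem card_typeSet (E : Finset (ℕ × ℕ)) (u p v a b : ℕ) :
    (typeSet E u p v a b).card = typeCount E u p v a b := rfl

theorem mem_typeSet {E : Finset (ℕ × ℕ)} {u p v a b : ℕ} {e : ℕ × ℕ} :
    e ∈ typeSet E u p v a b ↔ e ∈ E ∧ position u p v e.1 = a ∧ position u p v e.2 = b :=
  Finset.mem_filter

/-- The endpoints of the chords of two types that lie on the side they leave through. -/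
def throughEnds (E : Finset (ℕ × ℕ)) (u p v a : ℕ) : Finset ℕ :=
  (typeSet E u p v 0 a).image Prod.snd ∪ (typeSet E u p v a 6).image Prod.fst

theorem card_throughEnds_le (E : Finset (ℕ × ℕ)) (u p v a : ℕ) :
    (throughEnds E u p v a).card ≤ typeCount E u p v 0 a + typeCount E u p v a 6 :=
  (Finset.card_union_le _ _).trans (add_le_add Finset.card_image_le Finset.card_image_le)

theorem card_throughEnds_pos (E : Finset (ℕ × ℕ)) (u p v a : ℕ) :
    typeCount E u p v 0 a + typeCount E u p v a 6 = 0 ∨ 1 ≤ (throughEnds E u p v a).card := by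
  by_cases h : throughEnds E u p v a = ∅
  · left
    simpa [throughEnds, Finset.union_eq_empty, ← card_typeSet] using h
  · exact Or.inr (Finset.card_pos.2 (Finset.nonempty_iff_ne_empty.2 h))

theorem typeCount_le_mul (E : Finset (ℕ × ℕ)) (u p v a b : ℕ) :
    typeCount E u p v a b ≤
      ((typeSet E u p v a b).image Prod.fst).card * ((typeSet E u p v a b).image Prod.snd).card := by
  rw [← card_typeSet, ← Finset.card_product]
  refine Finset.card_le_card fun e he => Finset.mem_product.2
    ⟨Finset.mem_image_of_mem _ he, Finset.mem_image_of_mem _ he⟩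

section Region

variable {E : Finset (ℕ × ℕ)} {u p v : ℕ}

theorem card_innerEnds_le (hup : u < p) (hpv : p < v) :
    (innerEnds E u v).card ≤ min (typeCount E u p v 0 3 + typeCount E u p v 3 6) 1 +
      (throughEnds E u p v 2).card + (throughEnds E u p v 4).card := by
  set M : Finset ℕ := if typeCount E u p v 0 3 + typeCount E u p v 3 6 = 0 then ∅ else {p} with hM
  have hcard : M.card ≤ min (typeCount E u p v 0 3 + typeCount E u p v 3 6) 1 := by
    rw [hM]
    split_ifs with h
    · simp
    · rw [Finset.card_singleton]
      omega
  have hp {a b : ℕ} {e : ℕ × ℕ} (he : e ∈ typeSet E u p v a b)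
      (h : typeCount E u p v a b ≤ typeCount E u p v 0 3 + typeCount E u p v 3 6) : p ∈ M := by
    have : 0 < typeCount E u p v a b := Finset.card_pos.2 ⟨e, he⟩
    rw [hM, if_neg (by omega)]
    exact Finset.mem_singleton_self p
  have hsub : innerEnds E u v ⊆ M ∪ throughEnds E u p v 2 ∪ throughEnds E u p v 4 := by
    intro z hz
    obtain ⟨e, he, ⟨h1, h2, h3, rfl⟩ | ⟨h1, h2, h3, rfl⟩⟩ := mem_innerEnds.1 hz
    · have hc := position_cases u p v e.1
      have hd := position_cases u p v e.2
      have h0 : position u p v e.1 = 0 := by omega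
      rcases lt_trichotomy e.2 p with h | h | h
      · refine Finset.mem_union_left _ (Finset.mem_union_right _ (Finset.mem_union_left _ ?_))
        exact Finset.mem_image_of_mem _ (mem_typeSet.2 ⟨he, h0, by omega⟩)
      · refine Finset.mem_union_left _ (Finset.mem_union_left _ ?_)
        rw [h]
        exact hp (mem_typeSet.2 ⟨he, h0, by omega⟩ : e ∈ typeSet E u p v 0 3) (by omega)
      · refine Finset.mem_union_right _ (Finset.mem_union_left _ ?_)
        exact Finset.mem_image_of_mem _ (mem_typeSet.2 ⟨he, h0, by omega⟩)
    · have hc := position_cases u p v e.1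
      have hd := position_cases u p v e.2
      have h6 : position u p v e.2 = 6 := by omega
      rcases lt_trichotomy e.1 p with h | h | h
      · refine Finset.mem_union_left _ (Finset.mem_union_right _ (Finset.mem_union_right _ ?_))
        exact Finset.mem_image_of_mem _ (mem_typeSet.2 ⟨he, by omega, h6⟩)
      · refine Finset.mem_union_left _ (Finset.mem_union_left _ ?_)
        rw [h]
        exact hp (mem_typeSet.2 ⟨he, by omega, h6⟩ : e ∈ typeSet E u p v 3 6) (by omega)
      · refine Finset.mem_union_right _ (Finset.mem_union_right _ ?_)
        exact Finset.mem_image_of_mem _ (mem_typeSet.2 ⟨he, by omega, h6⟩)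
  calc (innerEnds E u v).card ≤ _ := Finset.card_le_card hsub
    _ ≤ (M.card + _) + _ := (Finset.card_union_le _ _).trans
        (Nat.add_le_add_right (Finset.card_union_le _ _) _)
    _ ≤ _ := by omega

theorem le_card_innerEnds_left (hup : u < p) (hpv : p < v) :
    max (typeCount E u p v 2 5) (max (throughEnds E u p v 2).card
      ((typeSet E u p v 2 4).image Prod.fst).card) ≤ (innerEnds E u p).card := by
  refine max_le ?_ (max_le ?_ ?_)
  · rw [← card_typeSet, ← Finset.card_image_of_injOn (f := Prod.fst)]
    · refine Finset.card_le_card (Finset.image_subset_iff.2 fun e he => ?_)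
      obtain ⟨he, h1, h2⟩ := mem_typeSet.1 he
      have hc := position_cases u p v e.1
      have hd := position_cases u p v e.2
      exact mem_innerEnds.2 ⟨e, he, Or.inr (by omega)⟩
    · intro e he f hf h
      obtain ⟨-, -, h1⟩ := mem_typeSet.1 (Finset.mem_coe.1 he)
      obtain ⟨-, -, h2⟩ := mem_typeSet.1 (Finset.mem_coe.1 hf)
      have hc := position_cases u p v e.2
      have hd := position_cases u p v f.2
      exact Prod.ext h (by omega)
  · refine Finset.card_le_card (Finset.union_subset ?_ ?_) <;>
      refine Finset.image_subset_iff.2 fun e he => ?_ <;>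
      obtain ⟨he, h1, h2⟩ := mem_typeSet.1 he <;>
      have hc := position_cases u p v e.1 <;>
      have hd := position_cases u p v e.2 <;>
      exact mem_innerEnds.2 ⟨e, he, by omega⟩
  · refine Finset.card_le_card (Finset.image_subset_iff.2 fun e he => ?_)
    obtain ⟨he, h1, h2⟩ := mem_typeSet.1 he
    have hc := position_cases u p v e.1
    have hd := position_cases u p v e.2
    exact mem_innerEnds.2 ⟨e, he, by omega⟩

theorem le_card_innerEnds_right (hup : u < p) (hpv : p < v) :
    max (typeCount E u p v 1 4) (max (throughEnds E u p v 4).card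
      ((typeSet E u p v 2 4).image Prod.snd).card) ≤ (innerEnds E p v).card := by
  refine max_le ?_ (max_le ?_ ?_)
  · rw [← card_typeSet, ← Finset.card_image_of_injOn (f := Prod.snd)]
    · refine Finset.card_le_card (Finset.image_subset_iff.2 fun e he => ?_)
      obtain ⟨he, h1, h2⟩ := mem_typeSet.1 he
      have hc := position_cases u p v e.1
      have hd := position_cases u p v e.2
      exact mem_innerEnds.2 ⟨e, he, Or.inl (by omega)⟩
    · intro e he f hf h
      obtain ⟨-, h1, -⟩ := mem_typeSet.1 (Finset.mem_coe.1 he)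
      obtain ⟨-, h2, -⟩ := mem_typeSet.1 (Finset.mem_coe.1 hf)
      have hc := position_cases u p v e.1
      have hd := position_cases u p v f.1
      exact Prod.ext (by omega) h
  · refine Finset.card_le_card (Finset.union_subset ?_ ?_) <;>
      refine Finset.image_subset_iff.2 fun e he => ?_ <;>
      obtain ⟨he, h1, h2⟩ := mem_typeSet.1 he <;>
      have hc := position_cases u p v e.1 <;>
      have hd := position_cases u p v e.2 <;>
      exact mem_innerEnds.2 ⟨e, he, by omega⟩
  · refine Finset.card_le_card (Finset.image_subset_iff.2 fun e he => ?_)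
    obtain ⟨he, h1, h2⟩ := mem_typeSet.1 he
    have hc := position_cases u p v e.1
    have hd := position_cases u p v e.2
    exact mem_innerEnds.2 ⟨e, he, by omega⟩

theorem typeCount_le_one (hup : u < p) (hpv : p < v) {a b : ℕ} (ha : a % 2 = 1) (hb : b % 2 = 1) :
    typeCount E u p v a b ≤ 1 := by
  refine Finset.card_le_one.2 fun e he f hf => ?_
  obtain ⟨-, h1, h2⟩ := mem_typeSet.1 he
  obtain ⟨-, h3, h4⟩ := mem_typeSet.1 hf
  have := position_cases u p v e.1
  have := position_cases u p v e.2
  have := position_cases u p v f.1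
  have := position_cases u p v f.2
  exact Prod.ext (by omega) (by omega)

end Region

/-- If every chord of `E` is crossed at most five times, then the number of chords below a chord
`uv` that is crossed at most five times is bounded linearly in `v - u` and the crossings below. -/
theorem six_mul_innerCard_le {E : Finset (ℕ × ℕ)} (hE : ∀ e ∈ E, e.1 < e.2)
    (hk : ∀ e ∈ E, chordCrossings E e.1 e.2 ≤ 5) (d : ℕ) :
    ∀ u v, u + 1 + d = v → chordCrossings E u v ≤ 5 →
      6 * innerCard E u v + credit (chordCrossings E u v) (innerEnds E u v).card ≤
        18 * d + innerCrossings E u v := by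
  induction d using Nat.strong_induction_on with
  | _ d ih =>
    intro u v hd hx
    rcases Nat.eq_zero_or_pos d with rfl | hpos
    · have h1 : innerCard E u v = 0 := by
        rw [innerCard, Finset.card_eq_zero, Finset.filter_eq_empty_iff]
        intro e he
        have := hE e he
        simp only [Inner]
        omega
      have h2 : chordCrossings E u v = 0 := by
        rw [chordCrossings, Finset.card_eq_zero, Finset.filter_eq_empty_iff]
        intro e he
        simp only [Interleave]
        omega
      simp [h1, h2, credit]
    · obtain ⟨p, hup, hpv, hx₂, hx₃⟩ := exists_apex E hk (by omega : u + 1 < v) hx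
      obtain ⟨d₂, rfl⟩ : ∃ d₂, p = u + 1 + d₂ := ⟨p - (u + 1), by omega⟩
      obtain ⟨d₃, rfl⟩ : ∃ d₃, v = u + 1 + d₂ + 1 + d₃ := ⟨v - (u + 1 + d₂ + 1), by omega⟩
      obtain rfl : d = d₂ + d₃ + 1 := by omega
      have ih₂ := ih d₂ (by omega) u (u + 1 + d₂) rfl hx₂
      have ih₃ := ih d₃ (by omega) (u + 1 + d₂) (u + 1 + d₂ + 1 + d₃) rfl hx₃
      have hr₁ := credit_mono hx (card_innerEnds_le (E := E) hup hpv)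
      have hr₂ := credit_mono hx₂ (le_card_innerEnds_left (E := E) hup hpv)
      have hr₃ := credit_mono hx₃ (le_card_innerEnds_right (E := E) hup hpv)
      have hI := innerCard_le E hup hpv
      have hK := innerCrossings_le E hE hup hpv
      have h13 := typeCount_le_one (E := E) hup hpv (a := 1) (b := 3) rfl rfl
      have h35 := typeCount_le_one (E := E) hup hpv (a := 3) (b := 5) rfl rfl
      have h6 {N x : ℕ} (hN : N ≤ 1) (hx : x ≤ 5) : 6 * N + x ≤ 6 + N * x := by
        interval_cases N <;> omega
      have h13' := h6 h13 hx₂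
      have h35' := h6 h35 hx₃
      have e₁ := chordCrossings_base E hup hpv
      have e₂ := chordCrossings_left E hup hpv
      have e₃ := chordCrossings_right E hup hpv
      have key := credit_triangle (e₁ ▸ hx) (e₂ ▸ hx₂) (e₃ ▸ hx₃)
        ⟨card_throughEnds_le E u _ _ 2, card_throughEnds_pos E u _ _ 2⟩
        ⟨card_throughEnds_le E u _ _ 4, card_throughEnds_pos E u _ _ 4⟩
        (Finset.card_image_le (s := typeSet E u (u + 1 + d₂) (u + 1 + d₂ + 1 + d₃) 2 4)
          (f := Prod.snd))
        (Finset.card_image_le (s := typeSet E u (u + 1 + d₂) (u + 1 + d₂ + 1 + d₃) 2 4)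
          (f := Prod.fst)) (typeCount_le_mul E u _ _ 2 4)
      rw [CreditLe, card_typeSet, ← e₁, ← e₂, ← e₃] at key
      nlinarith

theorem crossingCount_erase_add_le (E : Finset (ℕ × ℕ)) {e : ℕ × ℕ} (he : e ∈ E) :
    crossingCount (E.erase e) + chordCrossings E e.1 e.2 ≤ crossingCount E := by
  classical
  set F := E.filter fun f => Interleave (e.1, e.2) f ∨ Interleave f (e.1, e.2)
  set g : ℕ × ℕ → (ℕ × ℕ) × (ℕ × ℕ) := fun f => if Interleave e f then (e, f) else (f, e) with hg
  have hinj : Set.InjOn g F := by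
    intro f hf f' hf' h
    simp only [hg] at h
    have hf := (Finset.mem_filter.1 (Finset.mem_coe.1 hf)).2
    have hf' := (Finset.mem_filter.1 (Finset.mem_coe.1 hf')).2
    simp only [Prod.mk.eta] at hf hf'
    split_ifs at h with h1 h2 h2
    · exact (Prod.ext_iff.1 h).2
    · obtain ⟨h3, h4⟩ := Prod.ext_iff.1 h
      exact h4.trans h3
    · obtain ⟨h3, h4⟩ := Prod.ext_iff.1 h
      exact h3.trans h4
    · exact (Prod.ext_iff.1 h).1
  rw [crossingCount, chordCrossings, ← Finset.card_image_of_injOn hinj,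
    ← Finset.card_union_of_disjoint]
  · refine Finset.card_le_card (Finset.union_subset ?_ ?_)
    · exact Finset.filter_subset_filter _
        (Finset.product_subset_product (Finset.erase_subset _ _) (Finset.erase_subset _ _))
    · refine Finset.image_subset_iff.2 fun f hf => ?_
      obtain ⟨hf, h⟩ := Finset.mem_filter.1 hf
      simp only [Prod.mk.eta] at h
      simp only [hg]
      split_ifs with h1
      · exact Finset.mem_filter.2 ⟨Finset.mem_product.2 ⟨he, hf⟩, h1⟩
      · exact Finset.mem_filter.2 ⟨Finset.mem_product.2 ⟨hf, he⟩, h.resolve_left h1⟩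
  · rw [Finset.disjoint_left]
    intro q hq hq'
    obtain ⟨h1, h2⟩ := Finset.mem_product.1 (Finset.mem_filter.1 hq).1
    obtain ⟨f, -, rfl⟩ := Finset.mem_image.1 hq'
    simp only [hg] at h1 h2
    split_ifs at h1 h2
    · exact Finset.ne_of_mem_erase h1 rfl
    · exact Finset.ne_of_mem_erase h2 rfl

theorem six_mul_card_le (n : ℕ) (E : Finset (ℕ × ℕ)) (hE : ∀ e ∈ E, e.1 < e.2 ∧ e.2 < n) :
    6 * E.card ≤ 18 * n + crossingCount E := by
  induction E using Finset.strongInduction with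
  | _ E ih =>
    by_cases hk : ∀ e ∈ E, chordCrossings E e.1 e.2 ≤ 5
    · rcases E.eq_empty_or_nonempty with rfl | ⟨e, he⟩
      · simp
      obtain ⟨m, rfl⟩ : ∃ m, n = m + 2 := ⟨n - 2, by have := hE e he; omega⟩
      have h0 : chordCrossings E 0 (m + 1) = 0 := by
        rw [chordCrossings, Finset.card_eq_zero, Finset.filter_eq_empty_iff]
        intro e he
        have := hE e he
        simp only [Interleave]
        omega
      have h := six_mul_innerCard_le (fun e he => (hE e he).1) hk m 0 (m + 1) (by omega) (by omega)
      have hcard : E.card ≤ innerCard E 0 (m + 1) + 1 := by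
        refine (Finset.card_le_card fun e he => ?_).trans (Finset.card_insert_le (0, m + 1) _)
        have := hE e he
        by_cases h1 : e = (0, m + 1)
        · exact Finset.mem_insert.2 (Or.inl h1)
        · refine Finset.mem_insert.2 (Or.inr (Finset.mem_filter.2 ⟨he, ?_, ?_, ?_⟩))
          · omega
          · omega
          · exact fun h2 => h1 (Prod.ext h2.1 h2.2)
      have hcr : innerCrossings E 0 (m + 1) ≤ crossingCount E :=
        card_filter_le _ _ _ fun q _ h => h.1
      omega
    · push Not at hk
      obtain ⟨e, he, h6⟩ := hk
      have h1 := ih _ (Finset.erase_ssubset he) fun f hf => hE f (Finset.mem_of_mem_erase hf)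
      have h2 := crossingCount_erase_add_le E he
      have h3 := Finset.card_erase_add_one he
      omega

theorem six_mul_card_le_of_mem (S : Finset ℕ) (E : Finset (ℕ × ℕ))
    (hE : ∀ e ∈ E, e.1 < e.2 ∧ e.1 ∈ S ∧ e.2 ∈ S) :
    6 * E.card ≤ 18 * S.card + crossingCount E := by
  classical
  set r : ℕ → ℕ := fun i => (S.filter (· < i)).card with hr
  have hmono {i j : ℕ} (hi : i ∈ S) (h : i < j) : r i < r j := by
    refine Finset.card_lt_card (Finset.ssubset_iff_of_subset ?_ |>.2 ⟨i, ?_, ?_⟩)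
    · exact Finset.monotone_filter_right _ fun k _ hk => lt_trans hk h
    · exact Finset.mem_filter.2 ⟨hi, h⟩
    · simp
  have hlt {i j : ℕ} (hi : i ∈ S) (hj : j ∈ S) : r i < r j ↔ i < j := by
    refine ⟨fun h => ?_, hmono hi⟩
    by_contra h'
    rcases (not_lt.1 h').eq_or_lt with rfl | h'
    · omega
    · have := hmono hj h'
      omega
  have heq {i j : ℕ} (hi : i ∈ S) (hj : j ∈ S) (h : r i = r j) : i = j := by
    have h1 := hlt hi hj
    have h2 := hlt hj hi
    omega
  have hcard : (E.image (Prod.map r r)).card = E.card := by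
    refine Finset.card_image_of_injOn fun e he f hf h => ?_
    obtain ⟨h1, h2⟩ := Prod.ext_iff.1 h
    obtain ⟨-, he1, he2⟩ := hE e he
    obtain ⟨-, hf1, hf2⟩ := hE f hf
    exact Prod.ext (heq he1 hf1 h1) (heq he2 hf2 h2)
  have hcr : crossingCount (E.image (Prod.map r r)) ≤ crossingCount E := by
    refine (Finset.card_le_card fun q hq => ?_).trans
      (Finset.card_image_le (f := Prod.map (Prod.map r r) (Prod.map r r)))
    obtain ⟨hq, h⟩ := Finset.mem_filter.1 hq
    obtain ⟨h1, h2⟩ := Finset.mem_product.1 hq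
    obtain ⟨e, he, h1⟩ := Finset.mem_image.1 h1
    obtain ⟨f, hf, h2⟩ := Finset.mem_image.1 h2
    obtain ⟨-, he1, he2⟩ := hE e he
    obtain ⟨-, hf1, hf2⟩ := hE f hf
    refine Finset.mem_image.2 ⟨(e, f), Finset.mem_filter.2 ⟨Finset.mk_mem_product he hf, ?_⟩,
      Prod.ext h1 h2⟩
    rw [← h1, ← h2] at h
    exact ⟨(hlt he1 hf1).1 h.1, (hlt hf1 he2).1 h.2.1, (hlt he2 hf2).1 h.2.2⟩
  have h := six_mul_card_le S.card (E.image (Prod.map r r)) fun e he => by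
    obtain ⟨f, hf, rfl⟩ := Finset.mem_image.1 he
    obtain ⟨h1, h2, h3⟩ := hE f hf
    refine ⟨hmono h2 h1, Finset.card_lt_card (Finset.filter_ssubset.2 ⟨f.2, h3, lt_irrefl _⟩)⟩
  omega

/-- The probability of `S` when every element of `range n` is chosen with probability `x`. -/
def weight (n : ℕ) (x : ℝ) (S : Finset ℕ) : ℝ := x ^ S.card * (1 - x) ^ (n - S.card)

theorem sum_weight (n : ℕ) (x : ℝ) {A : Finset ℕ} (hA : A ⊆ Finset.range n) :
    ∑ S ∈ (Finset.range n).powerset, weight n x S * (if A ⊆ S then 1 else 0) = x ^ A.card := by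
  classical
  have h := Finset.prod_add (fun _ => x) (fun i => if i ∈ A then 0 else 1 - x) (Finset.range n)
  have h1 : ∏ i ∈ Finset.range n, (x + if i ∈ A then 0 else 1 - x) = x ^ A.card := by
    calc ∏ i ∈ Finset.range n, (x + if i ∈ A then 0 else 1 - x)
        = ∏ i ∈ Finset.range n, (if i ∈ A then x else 1) :=
          Finset.prod_congr rfl fun i _ => by split_ifs <;> ring
      _ = x ^ A.card := by
          rw [Finset.prod_ite_mem, Finset.inter_eq_right.2 hA, Finset.prod_const]
  rw [← h1, h]
  refine Finset.sum_congr rfl fun S hS => ?_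
  rw [Finset.mem_powerset] at hS
  rw [Finset.prod_const, weight, mul_assoc]
  congr 1
  split_ifs with hAS
  · rw [mul_one, ← Finset.card_range n, ← Finset.card_sdiff_of_subset hS, ← Finset.prod_const,
      Finset.card_range]
    refine Finset.prod_congr rfl fun i hi => ?_
    rw [if_neg fun h => (Finset.mem_sdiff.1 hi).2 (hAS h)]
  · obtain ⟨i, hi, hi'⟩ := Finset.not_subset.1 hAS
    rw [mul_zero, eq_comm]
    exact Finset.prod_eq_zero (Finset.mem_sdiff.2 ⟨hA hi, hi'⟩) (if_pos hi)

theorem sum_weight_mul_card {ι : Type*} (n k : ℕ) (x : ℝ) (T : Finset ι) (A : ι → Finset ℕ)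
    (hA : ∀ t ∈ T, A t ⊆ Finset.range n ∧ (A t).card = k) :
    ∑ S ∈ (Finset.range n).powerset, weight n x S * ((T.filter fun t => A t ⊆ S).card : ℝ) =
      x ^ k * T.card := by
  simp only [Finset.card_filter, Nat.cast_sum, Nat.cast_ite, Nat.cast_one, Nat.cast_zero,
    Finset.mul_sum]
  rw [Finset.sum_comm, Finset.sum_congr rfl fun t ht => (sum_weight n x (hA t ht).1).trans
    (by rw [(hA t ht).2]), Finset.sum_const, nsmul_eq_mul, mul_comm]

theorem six_mul_sq_mul_card_le (n : ℕ) (E : Finset (ℕ × ℕ))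
    (hE : ∀ e ∈ E, e.1 < e.2 ∧ e.2 < n) {x : ℝ} (h0 : 0 ≤ x) (h1 : x ≤ 1) :
    6 * (x ^ 2 * E.card) ≤ 18 * (x * n) + x ^ 4 * crossingCount E := by
  classical
  have hw (S : Finset ℕ) : 0 ≤ weight n x S :=
    mul_nonneg (pow_nonneg h0 _) (pow_nonneg (sub_nonneg.2 h1) _)
  have hS (S : Finset ℕ) (hS : S ⊆ Finset.range n) :
      6 * ((E.filter fun e => {e.1, e.2} ⊆ S).card : ℝ) ≤
      18 * (((Finset.range n).filter fun i => {i} ⊆ S).card : ℝ) +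
      ((((E ×ˢ E).filter fun q => Interleave q.1 q.2).filter fun q =>
        {q.1.1, q.1.2, q.2.1, q.2.2} ⊆ S).card : ℝ) := by
    have h := six_mul_card_le_of_mem S (E.filter fun e => {e.1, e.2} ⊆ S) fun e he => by
      obtain ⟨he, h⟩ := Finset.mem_filter.1 he
      exact ⟨(hE e he).1, h (by simp), h (by simp)⟩
    have hcard : (Finset.range n).filter (fun i => {i} ⊆ S) = S := by
      ext i
      simp only [Finset.mem_filter, Finset.singleton_subset_iff, and_iff_right_iff_imp]
      exact fun h => hS h
    have hcr : crossingCount (E.filter fun e => {e.1, e.2} ⊆ S) =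
        (((E ×ˢ E).filter fun q => Interleave q.1 q.2).filter fun q =>
          {q.1.1, q.1.2, q.2.1, q.2.2} ⊆ S).card := by
      rw [crossingCount]
      congr 1
      ext q
      simp only [Finset.mem_filter, Finset.mem_product, Finset.insert_subset_iff,
        Finset.singleton_subset_iff]
      tauto
    rw [hcard, ← hcr]
    exact_mod_cast h
  have h2 := sum_weight_mul_card n 2 x E (fun e => {e.1, e.2}) fun e he => by
    have := hE e he
    refine ⟨?_, Finset.card_pair (by omega)⟩
    simp only [Finset.insert_subset_iff, Finset.singleton_subset_iff, Finset.mem_range]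
    omega
  have h3 := sum_weight_mul_card n 1 x (Finset.range n) (fun i => {i}) fun i hi =>
    ⟨Finset.singleton_subset_iff.2 hi, Finset.card_singleton i⟩
  have h4 := sum_weight_mul_card n 4 x ((E ×ˢ E).filter fun q => Interleave q.1 q.2)
    (fun q => {q.1.1, q.1.2, q.2.1, q.2.2}) fun q hq => by
      obtain ⟨hq, h⟩ := Finset.mem_filter.1 hq
      have he := hE _ (Finset.mem_product.1 hq).1
      have hf := hE _ (Finset.mem_product.1 hq).2
      simp only [Interleave] at h
      constructor
      · simp only [Finset.insert_subset_iff, Finset.singleton_subset_iff, Finset.mem_range]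
        omega
      · rw [Finset.card_insert_of_notMem, Finset.card_insert_of_notMem, Finset.card_pair]
        · omega
        · simp only [Finset.mem_insert, Finset.mem_singleton]
          omega
        · simp only [Finset.mem_insert, Finset.mem_singleton]
          omega
  rw [Finset.card_range, pow_one] at h3
  rw [← crossingCount] at h4
  rw [← h2, ← h3, ← h4, Finset.mul_sum, Finset.mul_sum, ← Finset.sum_add_distrib]
  refine Finset.sum_le_sum fun S hS' => ?_
  have := mul_le_mul_of_nonneg_left (hS S (Finset.mem_powerset.1 hS')) (hw S)
  linarith

/-- The crossing lemma for chords of a convex polygon. -/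
theorem crossing_lemma (n : ℕ) (E : Finset (ℕ × ℕ)) (hE : ∀ e ∈ E, e.1 < e.2 ∧ e.2 < n)
    (hm : (73 / 16 : ℝ) * n ≤ E.card) :
    (1837568 / 19061833 : ℝ) * (E.card : ℝ) ^ 3 / (n : ℝ) ^ 2 ≤ crossingCount E := by
  rcases Nat.eq_zero_or_pos n with rfl | hn
  · simp
  have hn : (0 : ℝ) < n := by exact_mod_cast hn
  have hpos : (0 : ℝ) < E.card := by linarith
  set m : ℝ := (E.card : ℝ)
  have h := six_mul_sq_mul_card_le n E hE (x := 73 / 16 * n / m) (by positivity)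
    ((div_le_one hpos).2 hm)
  rw [div_le_iff₀ (by positivity)]
  have h' : 6 * (73 / 16) ^ 2 * m ^ 3 * n ^ 2 ≤
      18 * (73 / 16) * m ^ 3 * n ^ 2 + (73 / 16) ^ 4 * n ^ 4 * crossingCount E := by
    have := mul_le_mul_of_nonneg_right h (by positivity : 0 ≤ m ^ 4)
    field_simp at this ⊢
    nlinarith
  have hn2 : (0 : ℝ) < n ^ 2 := by positivity
  have h'' : 6 * (73 / 16) ^ 2 * m ^ 3 ≤
      18 * (73 / 16) * m ^ 3 + (73 / 16) ^ 4 * n ^ 2 * crossingCount E := by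
    refine le_of_mul_le_mul_right ?_ hn2
    linarith
  have : 0 < m ^ 3 := by positivity
  linarith

theorem cycBtw_iff {n : ℕ} {i j k : Fin n} (hj : i < j) (hk : i < k) :
    cycBtw n i j k ↔ k < j := by
  have h (k : Fin n) (hk : i < k) : (k.val + n - i.val) % n = k.val - i.val := by
    rw [Nat.sub_add_comm hk.le, Nat.add_mod_right, Nat.mod_eq_of_lt (by omega)]
  rw [cycBtw, h k hk, h j hj]
  omega

section Transport

variable {n : ℕ} (G : SimpleGraph (Fin n)) (σ : Fin n ≃ Fin n)

open Classical in
/-- The edges of `G` as pairs of positions in the cyclic order given by `σ`. -/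
noncomputable def positionPairs : Finset (Fin n × Fin n) :=
  Finset.univ.filter fun q => q.1 < q.2 ∧ G.Adj (σ.symm q.1) (σ.symm q.2)

/-- The edges of `G` as chords of the convex polygon with vertices `0, …, n - 1`. -/
noncomputable def chords : Finset (ℕ × ℕ) := (positionPairs G σ).image (Prod.map Fin.val Fin.val)

/-- The edge whose endpoints have the given positions. -/
def edgeAt (q : Fin n × Fin n) : Sym2 (Fin n) := s(σ.symm q.1, σ.symm q.2)

theorem mem_positionPairs {q : Fin n × Fin n} :
    q ∈ positionPairs G σ ↔ q.1 < q.2 ∧ G.Adj (σ.symm q.1) (σ.symm q.2) := by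
  simp [positionPairs]

theorem edgeAt_injOn : Set.InjOn (edgeAt σ) (positionPairs G σ) := by
  intro q hq r hr h
  have hq := ((mem_positionPairs G σ).1 hq).1
  have hr := ((mem_positionPairs G σ).1 hr).1
  simp only [edgeAt, Sym2.eq_iff, EmbeddingLike.apply_eq_iff_eq] at h
  obtain h | h := h
  · exact Prod.ext h.1 h.2
  · omega

theorem card_chords : (chords G σ).card = G.edgeSet.ncard := by
  have h : G.edgeSet = edgeAt σ '' positionPairs G σ := by
    ext e
    induction e using Sym2.ind with
    | _ a b =>
      simp only [SimpleGraph.mem_edgeSet, Set.mem_image, Finset.mem_coe, mem_positionPairs]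
      constructor
      · intro hab
        rcases lt_or_gt_of_ne (σ.injective.ne hab.ne) with hlt | hlt
        · exact ⟨(σ a, σ b), ⟨hlt, by simpa using hab⟩, by simp [edgeAt]⟩
        · exact ⟨(σ b, σ a), ⟨hlt, by simpa using hab.symm⟩, by simp [edgeAt, Sym2.eq_swap]⟩
      · rintro ⟨q, ⟨-, hq⟩, h⟩
        rwa [← SimpleGraph.mem_edgeSet, ← h, edgeAt, SimpleGraph.mem_edgeSet]
  rw [h, (edgeAt_injOn G σ).ncard_image, Set.ncard_coe_finset, chords,
    Finset.card_image_of_injective _ (Fin.val_injective.prodMap Fin.val_injective)]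

theorem crossing_edgeAt {q r : Fin n × Fin n} (h1 : q.1 < r.1) (h2 : r.1 < q.2) (h3 : q.2 < r.2) :
    crossing n σ (edgeAt σ q) (edgeAt σ r) := by
  refine ⟨_, _, _, _, rfl, rfl, ?_, ?_, ?_, ?_, ?_, ?_, ?_⟩
  · exact σ.symm.injective.ne (h1.trans h2).ne
  · exact σ.symm.injective.ne (h2.trans h3).ne
  · exact σ.symm.injective.ne h1.ne
  · exact σ.symm.injective.ne (h1.trans (h2.trans h3)).ne
  · exact σ.symm.injective.ne h2.ne'
  · exact σ.symm.injective.ne h3.ne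
  · simp only [Equiv.apply_symm_apply]
    rw [cycBtw_iff (h1.trans h2) h1, cycBtw_iff (h1.trans h2) (h1.trans (h2.trans h3))]
    exact iff_of_true h2 h3.not_gt

theorem crossingCount_chords_le :
    crossingCount (chords G σ) ≤ {p : Sym2 (Sym2 (Fin n)) | ∃ e f : Sym2 (Fin n), p = s(e, f) ∧
      e ∈ G.edgeSet ∧ f ∈ G.edgeSet ∧ crossing n (⇑σ) e f}.ncard := by
  classical
  set P := (positionPairs G σ ×ˢ positionPairs G σ).filter fun q =>
    q.1.1 < q.2.1 ∧ q.2.1 < q.1.2 ∧ q.1.2 < q.2.2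
  have hP {q : (Fin n × Fin n) × (Fin n × Fin n)} (hq : q ∈ P) : q.1 ∈ positionPairs G σ ∧
      q.2 ∈ positionPairs G σ ∧ q.1.1 < q.2.1 ∧ q.2.1 < q.1.2 ∧ q.1.2 < q.2.2 := by
    obtain ⟨hq, h⟩ := Finset.mem_filter.1 hq
    obtain ⟨h1, h2⟩ := Finset.mem_product.1 hq
    exact ⟨h1, h2, h⟩
  have hle : crossingCount (chords G σ) ≤ P.card := by
    refine (Finset.card_le_card fun q hq => ?_).trans (Finset.card_image_le
      (f := Prod.map (Prod.map Fin.val Fin.val) (Prod.map Fin.val Fin.val)))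
    obtain ⟨hq, h⟩ := Finset.mem_filter.1 hq
    obtain ⟨h1, h2⟩ := Finset.mem_product.1 hq
    obtain ⟨e, he, h1⟩ := Finset.mem_image.1 h1
    obtain ⟨f, hf, h2⟩ := Finset.mem_image.1 h2
    rw [← h1, ← h2] at h
    exact Finset.mem_image.2 ⟨(e, f), Finset.mem_filter.2 ⟨Finset.mk_mem_product he hf, h⟩,
      Prod.ext h1 h2⟩
  refine hle.trans ?_
  rw [← Set.ncard_coe_finset]
  refine Set.ncard_le_ncard_of_injOn (fun q => s(edgeAt σ q.1, edgeAt σ q.2)) ?_ ?_ (Set.toFinite _)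
  · intro q hq
    obtain ⟨h1, h2, h3, h4, h5⟩ := hP hq
    exact ⟨_, _, rfl, ((mem_positionPairs G σ).1 h1).2, ((mem_positionPairs G σ).1 h2).2,
      crossing_edgeAt σ h3 h4 h5⟩
  · intro q hq r hr h
    obtain ⟨h1, h2, h3, -⟩ := hP hq
    obtain ⟨k1, k2, k3, -⟩ := hP hr
    rcases Sym2.eq_iff.1 h with ⟨h4, h5⟩ | ⟨h4, h5⟩
    · exact Prod.ext (edgeAt_injOn G σ h1 k1 h4) (edgeAt_injOn G σ h2 k2 h5)
    · have h6 := edgeAt_injOn G σ h1 k2 h4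
      have h7 := edgeAt_injOn G σ h2 k1 h5
      rw [h6, h7] at h3
      exact absurd h3 k3.not_gt

end Transport

end ConvexGraph

/-- Outer Crossing Lemma: if `G` is a simple graph with `n` vertices and
`m ≥ (73/16) n` edges, then in every cyclic ordering `σ` of its vertices the
number of unordered pairs of crossing edges is at least
`(1837568/19061833) m³/n² ≈ (1/10.37) m³/n²`; in particular the outer crossing
number of `G` satisfies this bound. -/
theorem outer_crossing_lemma (n : ℕ) (G : SimpleGraph (Fin n))
    (hm : (73 / 16 : ℝ) * (n : ℝ) ≤ (G.edgeSet.ncard : ℝ)) (σ : Fin n ≃ Fin n) :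
    (1837568 / 19061833 : ℝ) * (G.edgeSet.ncard : ℝ) ^ 3 / (n : ℝ) ^ 2 ≤
      (({p : Sym2 (Sym2 (Fin n)) | ∃ e f : Sym2 (Fin n), p = s(e, f) ∧
          e ∈ G.edgeSet ∧ f ∈ G.edgeSet ∧ crossing n (⇑σ) e f}).ncard : ℝ) := by
  rw [← ConvexGraph.card_chords G σ] at hm ⊢
  refine (ConvexGraph.crossing_lemma n _ (fun e he => ?_) hm).trans
    (by exact_mod_cast ConvexGraph.crossingCount_chords_le G σ)
  obtain ⟨q, hq, rfl⟩ := Finset.mem_image.1 he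
  exact ⟨((ConvexGraph.mem_positionPairs G σ).1 hq).1, q.2.isLt⟩
end

section
/- Let G be a simple graph on n ≥ 3 vertices that is outer 6-planar, i.e., its vertices can be arranged in a cyclic order (equivalently, placed in convex position with straight-line edges) such that every edge is crossed by at most 6 other edges. Then G has at most 5n − 10 edges. -/
/-- The chords `p` and `q`, given as pairs of positions in increasing order, interleave. -/
def Interleave (p q : ℕ × ℕ) : Prop :=
  (p.1 < q.1 ∧ q.1 < p.2 ∧ p.2 < q.2) ∨ (q.1 < p.1 ∧ p.1 < q.2 ∧ q.2 < p.2)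

instance (p q : ℕ × ℕ) : Decidable (Interleave p q) := by
  unfold Interleave; infer_instance

/-- There are at most `3m` chords of length at most three among `m + 2` consecutive positions. -/
theorem card_short_chords_le (i m : ℕ) (W : Finset (ℕ × ℕ)) (hm : 1 ≤ m)
    (hW : ∀ p ∈ W, i ≤ p.1 ∧ p.1 < p.2 ∧ p.2 ≤ i + m + 1 ∧ p.2 ≤ p.1 + 3) :
    W.card ≤ 3 * m := by
  have hsub : W ⊆ ((Finset.Ico i (i + m + 1)).image fun a => (a, a + 1)) ∪
      ((Finset.Ico i (i + m)).image fun a => (a, a + 2)) ∪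
      ((Finset.Ico i (i + m - 1)).image fun a => (a, a + 3)) := by
    rintro ⟨a, b⟩ hp
    have h := hW _ hp
    simp only [Finset.mem_union, Finset.mem_image, Finset.mem_Ico, Prod.mk.injEq] at h ⊢
    have hb : b = a + 1 ∨ b = a + 2 ∨ b = a + 3 := by omega
    rcases hb with rfl | rfl | rfl
    · exact .inl (.inl ⟨a, by omega, rfl, rfl⟩)
    · exact .inl (.inr ⟨a, by omega, rfl, rfl⟩)
    · exact .inr ⟨a, by omega, rfl, rfl⟩
  have h₁ : ((Finset.Ico i (i + m + 1)).image fun a => (a, a + 1)).card ≤ i + m + 1 - i :=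
    Finset.card_image_le.trans_eq (Nat.card_Ico _ _)
  have h₂ : ((Finset.Ico i (i + m)).image fun a => (a, a + 2)).card ≤ i + m - i :=
    Finset.card_image_le.trans_eq (Nat.card_Ico _ _)
  have h₃ : ((Finset.Ico i (i + m - 1)).image fun a => (a, a + 3)).card ≤ i + m - 1 - i :=
    Finset.card_image_le.trans_eq (Nat.card_Ico _ _)
  have h₄ := Finset.card_le_card hsub
  have h₅ := Finset.card_union_le (((Finset.Ico i (i + m + 1)).image fun a => (a, a + 1)) ∪
      ((Finset.Ico i (i + m)).image fun a => (a, a + 2)))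
      ((Finset.Ico i (i + m - 1)).image fun a => (a, a + 3))
  have h₆ := Finset.card_union_le ((Finset.Ico i (i + m + 1)).image fun a => (a, a + 1))
      ((Finset.Ico i (i + m)).image fun a => (a, a + 2))
  omega

/-- The position of `x` after the `m` positions following `i` have been deleted. -/
def collapse (i m x : ℕ) : ℕ := if x ≤ i then x else x - m

theorem collapse_lt_iff {i m x y : ℕ} (hx : x ≤ i ∨ i + m < x) (hy : y ≤ i ∨ i + m < y) :
    collapse i m x < collapse i m y ↔ x < y := by
  unfold collapse; split_ifs <;> omega

/-- A set of chords on `n` points in convex position, each interleaving at most six others,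
has at most `5n - 10` elements. -/
theorem card_chords_le (n : ℕ) (hn : 3 ≤ n) (E : Finset (ℕ × ℕ))
    (hE : ∀ p ∈ E, p.1 < p.2 ∧ p.2 < n)
    (hc : ∀ p ∈ E, (E.filter (Interleave p)).card ≤ 6) :
    E.card + 10 ≤ 5 * n := by
  induction n using Nat.strong_induction_on generalizing E with
  | _ n ih =>
  by_cases hlong : ∃ p ∈ E.erase (0, n - 1), p.1 + 4 ≤ p.2
  · obtain ⟨q, hq, hmin⟩ := Finset.exists_min_image
      ((E.erase (0, n - 1)).filter fun p => p.1 + 4 ≤ p.2) (fun p => p.2 - p.1)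
      (by obtain ⟨p, hp, h⟩ := hlong; exact ⟨p, by simp only [Finset.mem_filter]; exact ⟨hp, h⟩⟩)
    obtain ⟨i, j⟩ := q
    simp only [Finset.mem_filter, Finset.mem_erase, ne_eq, Prod.mk.injEq] at hq hmin
    obtain ⟨⟨hne, hqE⟩, hij⟩ := hq
    have hjn := (hE _ hqE).2
    simp only at hjn
    obtain ⟨m, rfl⟩ : ∃ m, j = i + m + 1 := ⟨j - i - 1, by omega⟩
    set F := E.filter fun p =>
      (p.1 ≤ i ∨ i + m < p.1) ∧ (p.2 ≤ i ∨ i + m < p.2) with hF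
    set W := E.filter fun p =>
      i ≤ p.1 ∧ p.1 < p.2 ∧ p.2 ≤ i + m + 1 ∧ p.2 ≤ p.1 + 3 with hWdef
    set C := E.filter (Interleave (i, i + m + 1)) with hC
    have hcover : E ⊆ F ∪ W ∪ C := by
      rintro ⟨a, b⟩ hp
      have h := hE _ hp
      have hm := hmin (a, b)
      simp only [hF, hWdef, hC, Finset.mem_union, Finset.mem_filter, Interleave, hp, true_and]
      simp only [hp, and_true, Prod.mk.injEq] at h hm
      by_cases hab : ¬(a = 0 ∧ b = n - 1) ∧ a + 4 ≤ b
      · have := hm hab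
        omega
      · omega
    have hW : W.card ≤ 3 * m :=
      card_short_chords_le i m W (by omega) fun p hp => (Finset.mem_filter.1 hp).2
    have hC6 : C.card ≤ 6 := hc _ hqE
    set g : ℕ × ℕ → ℕ × ℕ := Prod.map (collapse i m) (collapse i m) with hg
    have hginj : Set.InjOn g F := by
      rintro ⟨a, b⟩ hp ⟨c, d⟩ hp' h
      simp only [hF, Finset.coe_filter, Set.mem_ofPred_eq] at hp hp'
      simp only [hg, Prod.map_apply, Prod.mk.injEq] at h ⊢
      have h₁ := collapse_lt_iff hp.2.1 hp'.2.1
      have h₂ := collapse_lt_iff hp'.2.1 hp.2.1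
      have h₃ := collapse_lt_iff hp.2.2 hp'.2.2
      have h₄ := collapse_lt_iff hp'.2.2 hp.2.2
      omega
    have hF' := ih (n - m) (by omega) (by omega) (F.image g) (by
        intro p hp
        obtain ⟨⟨a, b⟩, hq, rfl⟩ := Finset.mem_image.1 hp
        obtain ⟨hqE, h₁, h₂⟩ := Finset.mem_filter.1 hq
        have h := hE _ hqE
        simp only [hg, Prod.map_apply] at h h₁ h₂ ⊢
        refine ⟨(collapse_lt_iff h₁ h₂).2 h.1, ?_⟩
        unfold collapse; split_ifs <;> omega) (by
        intro p hp
        obtain ⟨⟨a, b⟩, hq, rfl⟩ := Finset.mem_image.1 hp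
        obtain ⟨hqE, h₁, h₂⟩ := Finset.mem_filter.1 hq
        refine le_trans (Finset.card_le_card ?_)
          ((Finset.card_image_le (f := g)).trans (hc _ hqE))
        intro r hr
        obtain ⟨hr, hI⟩ := Finset.mem_filter.1 hr
        obtain ⟨⟨c, d⟩, hs, rfl⟩ := Finset.mem_image.1 hr
        obtain ⟨hsE, h₃, h₄⟩ := Finset.mem_filter.1 hs
        refine Finset.mem_image_of_mem _ (Finset.mem_filter.2 ⟨hsE, ?_⟩)
        simpa only [Interleave, hg, Prod.map_apply, collapse_lt_iff h₁ h₃, collapse_lt_iff h₃ h₂,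
          collapse_lt_iff h₂ h₄, collapse_lt_iff h₃ h₁, collapse_lt_iff h₁ h₄,
          collapse_lt_iff h₄ h₂] using hI)
    rw [Finset.card_image_of_injOn hginj] at hF'
    have h₁ := Finset.card_le_card hcover
    have h₂ := Finset.card_union_le (F ∪ W) C
    have h₃ := Finset.card_union_le F W
    omega
  · push Not at hlong
    have h := card_short_chords_le 0 (n - 2) (E.erase (0, n - 1)) (by omega) (by
      intro p hp
      have h₁ := hlong p hp
      have h₂ := hE p (Finset.mem_of_mem_erase hp)
      omega)
    have h' := Finset.pred_card_le_card_erase (s := E) (a := (0, n - 1))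
    omega

theorem cycBtw_iff {n : ℕ} {a b x : Fin n} (hab : a < b) :
    cycBtw n a b x ↔ a < x ∧ x < b := by
  have hb : (b.val + n - a.val) % n = b.val - a.val := by
    rw [show b.val + n - a.val = b.val - a.val + n by omega, Nat.add_mod_right,
      Nat.mod_eq_of_lt (by omega)]
  unfold cycBtw
  rw [hb]
  rcases le_or_gt a x with h | h
  · rw [show x.val + n - a.val = x.val - a.val + n by omega, Nat.add_mod_right,
      Nat.mod_eq_of_lt (by omega)]
    omega
  · rw [Nat.mod_eq_of_lt (by omega)]
    omega

theorem crossing_of_interleave {n : ℕ} (σ : Fin n ≃ Fin n) {a b c d : Fin n}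
    (hab : a < b) (hcd : c < d) (h : Interleave (a, b) (c, d)) :
    crossing n σ s(σ.symm a, σ.symm b) s(σ.symm c, σ.symm d) := by
  unfold Interleave at h
  refine ⟨_, _, _, _, rfl, rfl, ?_⟩
  simp only [ne_eq, EmbeddingLike.apply_eq_iff_eq, Equiv.apply_symm_apply, cycBtw_iff hab]
  simp only at h
  omega

/-- An `n`-vertex outer `6`-planar graph has at most `5n - 10` edges. -/
theorem outer_six_planar_edge_bound (n : ℕ) (hn : 3 ≤ n) (G : SimpleGraph (Fin n))
    (hG : IsOuterKPlanar n 6 G) :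
    G.edgeSet.ncard ≤ 5 * n - 10 := by
  classical
  obtain ⟨σ, hσ⟩ := hG
  let φ : Fin n × Fin n → Sym2 (Fin n) := fun p => s(σ.symm p.1, σ.symm p.2)
  let v : Fin n × Fin n → ℕ × ℕ := Prod.map Fin.val Fin.val
  have hv : Function.Injective v := Fin.val_injective.prodMap Fin.val_injective
  let E : Finset (Fin n × Fin n) :=
    Finset.univ.filter fun p => p.1 < p.2 ∧ G.Adj (σ.symm p.1) (σ.symm p.2)
  have hφ : Set.InjOn φ {p | p.1 < p.2} := by
    rintro ⟨a, b⟩ hp ⟨c, d⟩ hq h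
    simp only [φ, Sym2.eq_iff, EmbeddingLike.apply_eq_iff_eq, Set.mem_ofPred_eq,
      Prod.mk.injEq] at hp hq h ⊢
    omega
  have hcard : G.edgeSet.ncard ≤ E.card := by
    refine le_trans (Set.ncard_le_ncard (t := ↑(E.image φ)) ?_ (Finset.finite_toSet _))
      ((Set.ncard_coe_finset _).trans_le Finset.card_image_le)
    intro e
    induction e with | _ x y
    intro h
    have hadj : G.Adj x y := h
    have hne : σ x ≠ σ y := fun h' => hadj.ne (σ.injective h')
    simp only [Finset.coe_image, Set.mem_image, Finset.mem_coe]
    rcases lt_or_gt_of_ne hne with hlt | hlt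
    · exact ⟨(σ x, σ y), by simp [E, hlt, hadj], by simp [φ]⟩
    · exact ⟨(σ y, σ x), by simp [E, hlt, hadj.symm], by simp [φ, Sym2.eq_swap]⟩
  have key := card_chords_le n hn (E.image v) (by
      intro p hp
      obtain ⟨⟨a, b⟩, hq, rfl⟩ := Finset.mem_image.1 hp
      exact ⟨(Finset.mem_filter.1 hq).2.1, b.isLt⟩) (by
      intro p hp
      obtain ⟨⟨a, b⟩, hq, rfl⟩ := Finset.mem_image.1 hp
      obtain ⟨-, hab, hadj⟩ := Finset.mem_filter.1 hq
      refine le_trans ?_ (hσ (φ (a, b)) hadj)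
      rw [Finset.filter_image]
      refine Finset.card_image_le.trans ?_
      rw [← Set.ncard_coe_finset]
      refine Set.ncard_le_ncard_of_injOn φ ?_ (hφ.mono ?_) (Set.toFinite _)
      · rintro ⟨c, d⟩ hr
        obtain ⟨hrE, hI⟩ := Finset.mem_filter.1 hr
        obtain ⟨-, hcd, hadj'⟩ := Finset.mem_filter.1 hrE
        exact ⟨hadj', crossing_of_interleave σ hab hcd hI⟩
      · rintro ⟨c, d⟩ hr
        exact (Finset.mem_filter.1 (Finset.mem_filter.1 hr).1).2.1)
  rw [Finset.card_image_of_injective _ hv] at key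
  omega
end
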